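/- Let E = EuclideanSpace ℝ (Fin N), let f : E → ℝ, let Δt > 0, let M : E →ₗ[ℝ] E be self-adjoint, and let G : E × E → E satisfy ⟪G(x,y), y − x⟫ = f(y) − f(x) for all x, y ∈ E. Suppose u : ℕ → E satisfies the undamped two-step scheme, for all n ≥ 1: M((u(n+1) − 2u(n) + u(n−1))/Δt²) + G((u(n)+u(n−1))/2, (u(n+1)+u(n))/2) = 0. Define v(n) := (u(n) − u(n−1))/Δt, m(n) := (u(n) + u(n−1))/2, and Π(n) := (1/2)⟪v(n), M v(n)⟫ + f(m(n)). Then the discrete total energy is exactly conserved: Π(n) = Π(1) for all n ≥ 1. -/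

import Mathlib

open RealInnerProductSpace

/-!
The second difference `z - 2y + x` is the difference of the increments `z - y` and `y - x`, while
the midpoints of `(x, y)` and `(y, z)` differ by half their sum. Pairing the residual of the scheme
with that half-sum therefore gives the change of kinetic energy (a difference of squares for the
symmetric form of `M`) plus the change of potential energy (the discrete gradient identity), so the
energy is constant as soon as the residual vanishes.
-/

section

variable {E : Type*} [SeminormedAddCommGroup E] [InnerProductSpace ℝ E]

/-- `G` is a discrete gradient of `f`: it turns the chain rule into an exact identity for finite
increments. -/
def IsDiscreteGradient (G : E → E → E) (f : E → ℝ) : Prop :=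
  ∀ x y, ⟪G x y, y - x⟫ = f y - f x

/-- The discrete total energy of two consecutive states `x`, `y` at time step `Δt`, with mass
operator `M` and potential `f`; the paper's `Π(n)` is its value at `x = u(n-1)`, `y = u(n)`. -/
noncomputable def discreteEnergy (M : E →ₗ[ℝ] E) (f : E → ℝ) (Δt : ℝ) (x y : E) : ℝ :=
  (1 / 2 : ℝ) * ⟪Δt⁻¹ • (y - x), M (Δt⁻¹ • (y - x))⟫ + f ((2 : ℝ)⁻¹ • (y + x))

/-- The residual of the undamped two-step scheme at three consecutive states `x`, `y`, `z`;
the scheme asks for it to vanish. -/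
noncomputable def twoStepResidual (M : E →ₗ[ℝ] E) (G : E → E → E) (Δt : ℝ) (x y z : E) : E :=
  M ((Δt ^ 2)⁻¹ • (z - (2 : ℝ) • y + x)) + G ((2 : ℝ)⁻¹ • (y + x)) ((2 : ℝ)⁻¹ • (z + y))

variable {M : E →ₗ[ℝ] E} {G : E → E → E} {f : E → ℝ}

theorem inner_map_sub_add_of_isSymmetric (hM : M.IsSymmetric) (a b : E) :
    ⟪M (a - b), a + b⟫ = ⟪a, M a⟫ - ⟪b, M b⟫ := by
  have cross : ⟪M a, b⟫ = ⟪M b, a⟫ := by rw [hM, real_inner_comm]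
  rw [map_sub, inner_sub_left, inner_add_right, inner_add_right, cross, hM a a, hM b b]
  ring

theorem discreteEnergy_sub_discreteEnergy (hM : M.IsSymmetric) (hG : IsDiscreteGradient G f)
    (Δt : ℝ) (x y z : E) :
    discreteEnergy M f Δt y z - discreteEnergy M f Δt x y =
      ⟪twoStepResidual M G Δt x y z, (2 : ℝ)⁻¹ • (z - x)⟫ := by
  have kinetic : ⟪M ((Δt ^ 2)⁻¹ • (z - (2 : ℝ) • y + x)), (2 : ℝ)⁻¹ • (z - x)⟫ =
      (1 / 2 : ℝ) * ⟪Δt⁻¹ • (z - y), M (Δt⁻¹ • (z - y))⟫ -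
        (1 / 2 : ℝ) * ⟪Δt⁻¹ • (y - x), M (Δt⁻¹ • (y - x))⟫ := by
    have second_difference : (Δt ^ 2)⁻¹ • (z - (2 : ℝ) • y + x) =
        Δt⁻¹ • (Δt⁻¹ • (z - y) - Δt⁻¹ • (y - x)) := by module
    have velocity_sum : Δt⁻¹ • (z - x) = Δt⁻¹ • (z - y) + Δt⁻¹ • (y - x) := by module
    rw [second_difference, map_smul, real_inner_smul_left, real_inner_smul_right, mul_left_comm,
      ← real_inner_smul_right, velocity_sum, inner_map_sub_add_of_isSymmetric hM]
    ring
  have potential : ⟪G ((2 : ℝ)⁻¹ • (y + x)) ((2 : ℝ)⁻¹ • (z + y)), (2 : ℝ)⁻¹ • (z - x)⟫ =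
      f ((2 : ℝ)⁻¹ • (z + y)) - f ((2 : ℝ)⁻¹ • (y + x)) := by
    rw [← hG]
    congr 1
    module
  rw [twoStepResidual, inner_add_left, kinetic, potential, discreteEnergy, discreteEnergy]
  ring

theorem discreteEnergy_eq_of_twoStepResidual_eq_zero (hM : M.IsSymmetric)
    (hG : IsDiscreteGradient G f) {Δt : ℝ} {x y z : E} (h : twoStepResidual M G Δt x y z = 0) :
    discreteEnergy M f Δt y z = discreteEnergy M f Δt x y := by
  rw [← sub_eq_zero, discreteEnergy_sub_discreteEnergy hM hG, h, inner_zero_left]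

theorem discrete_energy_conserved_general (hM : M.IsSymmetric) (hG : IsDiscreteGradient G f)
    {Δt : ℝ} (_hΔt : Δt ≠ 0) {u : ℕ → E}
    (hu : ∀ n, 1 ≤ n → twoStepResidual M G Δt (u (n - 1)) (u n) (u (n + 1)) = 0) :
    ∀ n, 1 ≤ n → discreteEnergy M f Δt (u (n - 1)) (u n) = discreteEnergy M f Δt (u 0) (u 1) := by
  intro n hn
  induction n, hn using Nat.le_induction with
  | base => rfl
  | succ n hn ih =>
    exact (discreteEnergy_eq_of_twoStepResidual_eq_zero hM hG (hu n hn)).trans ih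

end

/-- Exact conservation of the discrete total energy by the undamped two-step scheme
driven by a discrete gradient `G`: `Π(n) = Π(1)` for all `n ≥ 1`, where
`Π(n) = (1/2)⟪v(n), M v(n)⟫ + f(m(n))` with `v(n) = (u(n) − u(n−1))/Δt` and
`m(n) = (u(n) + u(n−1))/2`. -/
theorem discrete_energy_conserved (N : ℕ)
    (f : EuclideanSpace ℝ (Fin N) → ℝ) (Δt : ℝ) (hΔt : 0 < Δt)
    (M : EuclideanSpace ℝ (Fin N) →ₗ[ℝ] EuclideanSpace ℝ (Fin N))
    (hM_sa : ∀ x y : EuclideanSpace ℝ (Fin N), ⟪M x, y⟫ = ⟪x, M y⟫)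
    (G : EuclideanSpace ℝ (Fin N) → EuclideanSpace ℝ (Fin N) → EuclideanSpace ℝ (Fin N))
    (hG : ∀ x y : EuclideanSpace ℝ (Fin N), ⟪G x y, y - x⟫ = f y - f x)
    (u : ℕ → EuclideanSpace ℝ (Fin N))
    (hu : ∀ n, 1 ≤ n →
      M ((Δt ^ 2)⁻¹ • (u (n + 1) - (2 : ℝ) • u n + u (n - 1))) +
        G ((2 : ℝ)⁻¹ • (u n + u (n - 1))) ((2 : ℝ)⁻¹ • (u (n + 1) + u n)) = 0) :
    ∀ n, 1 ≤ n →
      (1/2 : ℝ) * ⟪Δt⁻¹ • (u n - u (n - 1)), M (Δt⁻¹ • (u n - u (n - 1)))⟫ +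
          f ((2 : ℝ)⁻¹ • (u n + u (n - 1))) =
        (1/2 : ℝ) * ⟪Δt⁻¹ • (u 1 - u 0), M (Δt⁻¹ • (u 1 - u 0))⟫ +
          f ((2 : ℝ)⁻¹ • (u 1 + u 0)) :=
  discrete_energy_conserved_general hM_sa hG hΔt.ne' hu
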